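/- arXiv:2105.00986 — 3 statements merged into one kernel-verified Lean document; each statement's English description precedes it below -/
import Mathlib

section
/- Let A = ⨁_{n≥0} A_n be an ℕ-graded k-algebra with A_0 = k·1 and each A_n finite dimensional over k (connected graded and locally finite), which is left Noetherian, and let ε : A → k be the augmentation with kernel ⨁_{n≥1} A_n. Let B = A[x] be the polynomial ring over A in one central variable x (graded by placing x in degree 2), with augmentation ε' : B → k extending ε and sending x to 0. If ⨁_{i≥0} Ext^i_A(k,A) is one-dimensional over k, then B is left Noetherian and ⨁_{i≥0} Ext^i_B(k,B) is one-dimensional over k. -/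
open CategoryTheory
open scoped DirectSum

noncomputable section

/-!
Two independent facts are needed: Hilbert's basis theorem for the polynomial ring over a
noncommutative left Noetherian ring, and Rees' change of rings isomorphism
`Ext^{n+1}_{A[X]}(N, A[X]) ≅ Ext^n_A(N, A)` for every left `A`-module `N`, viewed as an
`A[X]`-module on which `X` acts by `0`. The latter, together with `Hom_{A[X]}(N, A[X]) = 0` (which
holds because `X` is regular on `A[X]` and kills `N`), shows that the total Ext of `k` over `A[X]` is the total Ext of `k` over `A`
shifted by one degree, so the two direct sums have the same dimension.

Hilbert's theorem is proved through the ideals of leading coefficients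
(`Polynomial.isNoetherianRing_left`): since `X` is central, the classical argument carries over to
left ideals.

The Rees map `shift` sends an `A`-extension class to the corresponding `A[X]`-class, followed by
the class of the short exact sequence `0 → A[X] → A[X] → A → 0` given by multiplication by `X`.
Bijectivity (`shift_bijective`) is proved by induction on `n`, for all `N` at once:

* in degree `0`, the long exact sequence identifies `Hom_{A[X]}(N, A) = Hom_A(N, A)` with the
  classes in `Ext^1_{A[X]}(N, A[X])` killed by `X`, and `X` kills all of them
  (`ext_one_comp_xEnd`);
* in the inductive step, a presentation `0 → N' → F → N → 0` with `F` free over `A` lets one pass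
  from `N'` to `N`. Over `A` the module `F` is projective; over `A[X]` it has projective dimension
  at most one (`killX_free_pd`), so `Ext^{n+2}_{A[X]}(F, A[X]) = 0`.

These arguments use Mathlib's derived-category groups `Abelian.Ext`, where Yoneda composition and
the long exact sequences are available. The groups of the statement are left derived functors of
the `k`-linear Yoneda functor; `extIso` compares the two, computing both with a projective
resolution.
-/

/-! ### Hilbert's basis theorem for left ideals -/

lemma Ideal.mem_leadingCoeffNth_left {R : Type} [Ring R] (I : Ideal (Polynomial R))
    (n : ℕ) (x : R) :
    x ∈ I.leadingCoeffNth n ↔ ∃ p ∈ I, p.degree ≤ n ∧ p.leadingCoeff = x := by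
  simp only [leadingCoeffNth, degreeLE, Submodule.mem_map, Polynomial.lcoeff_apply, Submodule.mem_inf,
    Polynomial.mem_degreeLE]
  constructor
  · rintro ⟨p, ⟨hpdeg, hpI⟩, rfl⟩
    rcases lt_or_eq_of_le hpdeg with hpdeg | hpdeg
    · refine ⟨0, I.zero_mem, bot_le, ?_⟩
      rw [Polynomial.leadingCoeff_zero, eq_comm]
      exact Polynomial.coeff_eq_zero_of_degree_lt hpdeg
    · refine ⟨p, hpI, le_of_eq hpdeg, ?_⟩
      rw [Polynomial.leadingCoeff, Polynomial.natDegree, hpdeg, Nat.cast_withBot, WithBot.unbotD_coe]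
  · rintro ⟨p, hpI, hpdeg, rfl⟩
    have : p.natDegree + (n - p.natDegree) = n :=
      add_tsub_cancel_of_le (Polynomial.natDegree_le_of_degree_le hpdeg)
    refine ⟨Polynomial.X ^ (n - p.natDegree) * p, ⟨?_, I.mul_mem_left _ hpI⟩, ?_⟩
    · rw [Polynomial.X_pow_mul]
      apply le_trans (Polynomial.degree_mul_le _ _) _
      apply le_trans (add_le_add Polynomial.degree_le_natDegree (Polynomial.degree_X_pow_le _)) _
      rw [← Nat.cast_add, this]
    · rw [Polynomial.X_pow_mul, Polynomial.leadingCoeff,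
        ← Polynomial.coeff_mul_X_pow p (n - p.natDegree), this]

lemma Ideal.leadingCoeffNth_mono_left {R : Type} [Ring R] (I : Ideal (Polynomial R)) {m n : ℕ}
    (H : m ≤ n) : I.leadingCoeffNth m ≤ I.leadingCoeffNth n := by
  intro r hr
  simp only [mem_leadingCoeffNth_left] at hr ⊢
  rcases hr with ⟨p, hpI, hpdeg, rfl⟩
  refine ⟨Polynomial.X ^ (n - m) * p, I.mul_mem_left _ hpI, ?_, ?_⟩
  · rw [Polynomial.X_pow_mul]
    refine le_trans (Polynomial.degree_mul_le _ _) ?_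
    grw [hpdeg, Polynomial.degree_X_pow_le]
    rw [← Nat.cast_add, add_tsub_cancel_of_le H]
  · rw [Polynomial.X_pow_mul, Polynomial.leadingCoeff_mul_X_pow]

lemma Ideal.degreeLE_fg_left {R : Type} [Ring R] [IsNoetherianRing R] (I : Ideal (Polynomial R))
    (n : ℕ) : (I.degreeLE n).FG := by
  classical
  exact isNoetherian_submodule_left.1
    (isNoetherian_of_fg_of_noetherian _ ⟨_, Polynomial.degreeLE_eq_span_X_pow.symm⟩) _

/-- Hilbert's basis theorem for a possibly noncommutative coefficient ring: if `R` is left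
Noetherian, so is `R[X]`. -/
theorem Polynomial.isNoetherianRing_left (R : Type) [Ring R] [inst : IsNoetherianRing R] :
    IsNoetherianRing (Polynomial R) := by
  refine isNoetherianRing_iff.2 ⟨fun I : Ideal (Polynomial R) => ?_⟩
  -- The left ideals of leading coefficients of elements of `I` of degree `n` stabilize at `N`.
  obtain ⟨N, hN⟩ := monotone_stabilizes_iff_noetherian.2 inst
    ⟨I.leadingCoeffNth, fun _ _ h => I.leadingCoeffNth_mono_left h⟩
  replace hN : ∀ k, N ≤ k → I.leadingCoeffNth N = I.leadingCoeffNth k := hN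
  -- `I` is generated by finitely many generators of its part of degree at most `N`.
  obtain ⟨s, hs⟩ := I.degreeLE_fg_left N
  have hs2 : ∀ {x}, x ∈ I.degreeLE N → x ∈ Ideal.span (s : Set (Polynomial R)) := by
    intro x hx
    rw [← hs] at hx
    induction hx using Submodule.span_induction with
    | mem x hx => exact Ideal.subset_span hx
    | zero => exact Ideal.zero_mem _
    | add x y _ _ hx hy => exact Ideal.add_mem _ hx hy
    | smul c f _ hf => rw [← Polynomial.C_mul']; exact Ideal.mul_mem_left _ _ hf
  refine ⟨s, le_antisymm (Ideal.span_le.2 fun x hx => ?_) ?_⟩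
  · have : x ∈ I.degreeLE N := hs ▸ Submodule.subset_span hx
    exact this.2
  intro p hp
  change p ∈ Ideal.span (s : Set (Polynomial R))
  generalize hn : p.natDegree = k
  induction k using Nat.strong_induction_on generalizing p with | _ k ih
  rcases le_or_gt k N with h | h
  · subst k
    exact hs2 ⟨Polynomial.mem_degreeLE.2
      (Polynomial.degree_le_natDegree.trans <| WithBot.coe_le_coe.2 h), hp⟩
  have hp0 : p ≠ 0 := by
    rintro rfl
    simp only [natDegree_zero] at hn
    omega
  have hmem : p.leadingCoeff ∈ I.leadingCoeffNth N := by
    rw [hN k h.le]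
    exact (I.mem_leadingCoeffNth_left _ _).2 ⟨_, hp, hn ▸ Polynomial.degree_le_natDegree, rfl⟩
  rw [I.mem_leadingCoeffNth_left] at hmem
  obtain ⟨q, hq, hdq, hlqp⟩ := hmem
  have hq0 : q ≠ 0 := by
    rintro rfl
    rw [Polynomial.leadingCoeff_zero] at hlqp
    exact hp0 (Polynomial.leadingCoeff_eq_zero.1 hlqp.symm)
  have hdq' : q.natDegree ≤ N := Polynomial.natDegree_le_of_degree_le hdq
  have : Nontrivial R := ⟨p.leadingCoeff, 0, mt Polynomial.leadingCoeff_eq_zero.1 hp0⟩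
  -- `X ^ (k - deg q) * q` lies in `I` and has the same leading term as `p`.
  have h1 : p.degree = (q * Polynomial.X ^ (k - q.natDegree)).degree := by
    rw [Polynomial.degree_mul', Polynomial.degree_X_pow, Polynomial.degree_eq_natDegree hp0,
      Polynomial.degree_eq_natDegree hq0, ← Nat.cast_add, add_tsub_cancel_of_le (by omega), hn]
    rw [Polynomial.leadingCoeff_X_pow, mul_one]
    exact mt Polynomial.leadingCoeff_eq_zero.1 hq0
  have h2 : p.leadingCoeff = (q * Polynomial.X ^ (k - q.natDegree)).leadingCoeff := by
    rw [← hlqp, Polynomial.leadingCoeff_mul_X_pow]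
  have hlt := Polynomial.degree_sub_lt_left h1 hp0 h2
  rw [Polynomial.degree_eq_natDegree hp0] at hlt
  rw [← Polynomial.X_pow_mul] at hlt
  rw [← sub_add_cancel p (Polynomial.X ^ (k - q.natDegree) * q)]
  refine Ideal.add_mem _ ?_ (Ideal.mul_mem_left _ _ (hs2 ⟨Polynomial.mem_degreeLE.2 hdq, hq⟩))
  by_cases hpq : p - Polynomial.X ^ (k - q.natDegree) * q = 0
  · rw [hpq]
    exact Ideal.zero_mem _
  refine ih _ ?_ (I.sub_mem hp (I.mul_mem_left _ hq)) rfl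
  rwa [Polynomial.degree_eq_natDegree hpq, Nat.cast_lt, hn] at hlt

/-! ### Restriction of scalars along `X ↦ 0` -/

namespace GorensteinPoly
open Polynomial Abelian

section
variable (A : Type) [Ring A]

/-- The functor viewing an `A`-module as an `A[X]`-module on which `X` acts by `0`. -/
abbrev killX : ModuleCat.{0} A ⥤ ModuleCat.{0} A[X] :=
  ModuleCat.restrictScalars.{0} (constantCoeff : A[X] →+* A)

lemma killX_map_exact (S : ShortComplex (ModuleCat.{0} A)) (h : S.Exact) :
    (S.map (killX A)).Exact := by
  rw [ShortComplex.ShortExact.moduleCat_exact_iff_function_exact] at h ⊢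
  exact h

instance : Limits.PreservesFiniteLimits (killX A) := by
  have := ((Functor.exact_tfae (killX A)).out 1 3).mp (killX_map_exact A)
  exact this.1

instance : Limits.PreservesFiniteColimits (killX A) := by
  have := ((Functor.exact_tfae (killX A)).out 1 3).mp (killX_map_exact A)
  exact this.2

variable {A}

lemma X_smul_killX (M : ModuleCat.{0} A) (m : (killX A).obj M) : (X : A[X]) • m = 0 := by
  rw [ModuleCat.restrictScalars.smul_def, constantCoeff_apply, coeff_X_zero]
  exact zero_smul A (show M from m)

/-- Multiplication by `X`, which is an endomorphism of every `A[X]`-module because `X` is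
central. -/
def xEnd (M : ModuleCat.{0} A[X]) : M ⟶ M := ModuleCat.ofHom
  { toFun m := (X : A[X]) • m
    map_add' := smul_add _
    map_smul' r m := by rw [RingHom.id_apply, ← mul_smul, ← mul_smul, X_mul] }

lemma xEnd_apply (M : ModuleCat.{0} A[X]) (m : M) : xEnd M m = (X : A[X]) • m := rfl

lemma xEnd_comp {M N : ModuleCat.{0} A[X]} (f : M ⟶ N) : xEnd M ≫ f = f ≫ xEnd N := by
  ext m
  exact map_smul f.hom X m

lemma xEnd_killX (M : ModuleCat.{0} A) : xEnd ((killX A).obj M) = 0 := by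
  ext m
  exact X_smul_killX M m

/-- If `X` kills `N`, then the action of `X` on the second argument of `Ext^1(N, Y)` is zero.
Present a class as the image of some `g : N' ⟶ Y` under the connecting map of a sequence
`0 → N' → P → N → 0` with `P` projective. Since `X` maps `P` into `N'`, the map `xEnd N' ≫ g`
extends to `P`, so the connecting map kills it. -/
lemma ext_one_comp_xEnd {N : ModuleCat.{0} A[X]} (hN : xEnd N = 0) (Y : ModuleCat.{0} A[X])
    (α : Ext.{0} N Y 1) : α.comp (Ext.mk₀ (xEnd Y)) (add_zero 1) = 0 := by
  have hS := ModuleCat.shortExact_projectiveShortComplex N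
  set S := N.projectiveShortComplex
  have : Mono S.f := hS.mono_f
  have : Projective S.X₂ :=
    ModuleCat.projective_of_free (Module.Free.chooseBasis A[X] N.projectiveShortComplex.X₂)
  obtain ⟨g, rfl⟩ := Ext.contravariant_sequence_exact₃ hS Y α
    (Ext.eq_zero_of_projective _) (add_zero 1)
  obtain ⟨g, rfl⟩ := (Ext.mk₀_bijective _ _).2 g
  have h0 : xEnd S.X₂ ≫ S.g = 0 := by
    rw [xEnd_comp]; exact (congrArg (S.g ≫ ·) hN).trans Limits.comp_zero
  have h1 : xEnd S.X₁ = S.f ≫ hS.exact.lift (xEnd S.X₂) h0 := by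
    rw [← cancel_mono S.f, Category.assoc, ShortComplex.Exact.lift_f, xEnd_comp]
  rw [Ext.comp_assoc_of_second_deg_zero, Ext.mk₀_comp_mk₀, ← xEnd_comp, h1,
    Category.assoc, ← Ext.mk₀_comp_mk₀, ← Ext.comp_assoc_of_second_deg_zero, hS.extClass_comp,
    Ext.zero_comp]

variable (A) in
/-- The sequence `0 → A[X] → A[X] → A → 0` of `A[X]`-modules, given by multiplication by `X`
and the constant coefficient. -/
abbrev xSeq : ShortComplex (ModuleCat.{0} A[X]) :=
  ShortComplex.mk (X₁ := ModuleCat.of A[X] A[X]) (X₂ := ModuleCat.of A[X] A[X])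
    (X₃ := (killX A).obj (ModuleCat.of A A)) (xEnd (ModuleCat.of A[X] A[X]))
    (ModuleCat.ofHom (Y := (killX A).obj (ModuleCat.of A A))
      { toFun p := (constantCoeff p : A)
        map_add' := map_add _
        map_smul' r p := map_mul constantCoeff r p })
    (by ext; exact coeff_X_mul_zero (1 : A[X]))

variable (A) in
lemma xSeq_shortExact : (xSeq A).ShortExact where
  exact := by
    rw [ShortComplex.ShortExact.moduleCat_exact_iff_function_exact]
    intro (p : A[X])
    exact (X_dvd_iff (f := p)).symm.trans
      ⟨fun ⟨q, h⟩ => ⟨q, h.symm⟩, fun ⟨q, h⟩ => ⟨q, h.symm⟩⟩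
  mono_f := by
    rw [ModuleCat.mono_iff_injective]
    intro (p : A[X]) (q : A[X]) (h : X * p = X * q)
    refine Polynomial.ext fun n => ?_
    simpa using congrArg (fun r => coeff r (n+1)) h
  epi_g := by
    rw [ModuleCat.epi_iff_surjective]
    intro (a : A)
    exact ⟨(C a : A[X]), coeff_C_zero (a := a)⟩

lemma hom_killX_eq_zero (M : ModuleCat.{0} A) (f : (killX A).obj M ⟶ ModuleCat.of A[X] A[X]) :
    f = 0 := by
  have := (xSeq_shortExact A).mono_f
  exact (cancel_mono (xSeq A).f).1
    ((xEnd_comp f).symm.trans (by rw [xEnd_killX, Limits.zero_comp, Limits.zero_comp]))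

/-- The sequence `0 → A[X]^(ι) → A[X]^(ι) → A^(ι) → 0` is a projective resolution of
length one. -/
lemma finsupp_pd (ι : Type) :
    HasProjectiveDimensionLT ((killX A).obj (ModuleCat.of A (ι →₀ A))) 2 := by
  let F := ModuleCat.of A[X] (ι →₀ A[X])
  have hF : Projective F :=
    ModuleCat.projective_of_free (Finsupp.basisSingleOne (R := A[X]) (ι := ι))
  let S : ShortComplex (ModuleCat.{0} A[X]) := ShortComplex.mk (X₁ := F) (X₂ := F)
    (X₃ := (killX A).obj (ModuleCat.of A (ι →₀ A))) (xEnd F)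
    (ModuleCat.ofHom (Y := (killX A).obj (ModuleCat.of A (ι →₀ A)))
      { toFun p := (Finsupp.mapRange.addMonoidHom
          (constantCoeff : A[X] →+* A).toAddMonoidHom p : ι →₀ A)
        map_add' := map_add _
        map_smul' r p := by
          refine Finsupp.ext fun i => map_mul constantCoeff r (p i) })
    (ModuleCat.hom_ext (LinearMap.ext fun (p : ι →₀ A[X]) => Finsupp.ext fun i =>
      coeff_X_mul_zero (p i)))
  have hS : S.ShortExact :=
    { exact := by
        rw [ShortComplex.ShortExact.moduleCat_exact_iff_function_exact]
        intro p
        constructor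
        · intro h
          refine ⟨Finsupp.mapRange divX divX_zero p, Finsupp.ext fun i => ?_⟩
          have hi : (p i).coeff 0 = 0 := DFunLike.congr_fun (F := ι →₀ A) h i
          exact (by simpa [hi] using X_mul_divX_add (p i) : X * divX (p i) = p i)
        · rintro ⟨q, rfl⟩
          exact Finsupp.ext fun i => coeff_X_mul_zero (q i)
      mono_f := by
        rw [ModuleCat.mono_iff_injective]
        intro p q h
        refine Finsupp.ext fun i => ?_
        replace h : X * p i = X * q i := DFunLike.congr_fun (F := ι →₀ A[X]) h i
        ext n
        simpa using congrArg (fun r => coeff r (n+1)) h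
      epi_g := by
        rw [ModuleCat.epi_iff_surjective]
        intro a
        exact ⟨Finsupp.mapRange (C : A →+* A[X]) (map_zero _) a,
          Finsupp.ext fun i => coeff_C_zero⟩ }
  exact hS.hasProjectiveDimensionLT_X₃ 1 inferInstance inferInstance

lemma killX_free_pd (P : ModuleCat.{0} A) [Module.Free A P] :
    HasProjectiveDimensionLT ((killX A).obj P) 2 := by
  have := finsupp_pd (A := A) (Module.Free.ChooseBasisIndex A P)
  exact hasProjectiveDimensionLT_of_iso
    ((killX A).mapIso (Module.Free.chooseBasis A P).repr.toModuleIso.symm) 2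

end

/-! ### The Rees isomorphism -/

section
variable (k : Type) [Field k] {A : Type} [Ring A] [Algebra k A]

instance : (killX A).Linear k where
  map_smul {M N} f r := by
    ext m
    have h : algebraMap k A r = constantCoeff (algebraMap k A[X] r) := by
      rw [Polynomial.algebraMap_apply, constantCoeff_apply, coeff_C_zero]
    exact congrArg (fun a : A => a • f m) h

/-- The Rees map: apply `killX` to a class over `A`, then compose with the connecting class of
`xSeq A`. -/
def shift (N : ModuleCat.{0} A) (n : ℕ) :
    Ext.{0} N (ModuleCat.of A A) n →ₗ[k]
      Ext.{0} ((killX A).obj N) (ModuleCat.of A[X] A[X]) (n + 1) :=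
  (Ext.bilinearCompOfLinear k _ _ _ n 1 (n + 1) rfl).flip (xSeq_shortExact A).extClass ∘ₗ
    (killX A).mapExtLinearMap k N (ModuleCat.of A A) n

lemma shift_apply (N : ModuleCat.{0} A) (n : ℕ) (α : Ext.{0} N (ModuleCat.of A A) n) :
    shift k N n α = (α.mapExactFunctor (killX A)).comp (xSeq_shortExact A).extClass rfl := rfl

/-- Rees' change of rings theorem: `Ext^n_A(N, A) ≅ Ext^{n+1}_{A[X]}(N, A[X])`. -/
lemma shift_bijective (n : ℕ) (N : ModuleCat.{0} A) : Function.Bijective (shift k N n) := by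
  induction n generalizing N with
  | zero =>
    constructor
    · rw [injective_iff_map_eq_zero]
      intro α h
      obtain ⟨f, rfl⟩ := (Ext.mk₀_bijective _ _).2 α
      rw [shift_apply, Ext.mapExactFunctor_mk₀] at h
      obtain ⟨g, hg⟩ := Ext.covariant_sequence_exact₃ _ (xSeq_shortExact A) _ _ h
      obtain ⟨g, rfl⟩ := (Ext.mk₀_bijective _ _).2 g
      obtain rfl : g = 0 := hom_killX_eq_zero N g
      rw [Ext.mk₀_zero, Ext.zero_comp, ← Ext.mk₀_zero] at hg
      have := (Ext.mk₀_bijective _ _).1 hg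
      rw [(killX A).map_injective (this.symm.trans ((killX A).map_zero _ _).symm), Ext.mk₀_zero]
    · intro β
      obtain ⟨γ, hγ⟩ := Ext.covariant_sequence_exact₁ _ (xSeq_shortExact A) β
        (ext_one_comp_xEnd (xEnd_killX N) _ β) rfl
      obtain ⟨g, rfl⟩ := (Ext.mk₀_bijective _ _).2 γ
      -- An `A[X]`-linear map `g` from `killX N` to `A` is `A`-linear, as `C a` acts as `a`.
      let f : N ⟶ ModuleCat.of A A := ModuleCat.ofHom
        { toFun m := g.hom (show (killX A).obj N from m)
          map_add' := map_add g.hom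
          map_smul' a m := by
            have h : a = constantCoeff (C a) := (coeff_C_zero (a := a)).symm
            exact (congrArg (fun b : A => g.hom (show (killX A).obj N from b • m)) h).trans
              ((map_smul g.hom (C a) (show (killX A).obj N from m)).trans
                (congrArg (fun b : A => b • (show A from g.hom (show (killX A).obj N from m)))
                  h.symm)) }
      refine ⟨Ext.mk₀ f, ?_⟩
      rw [shift_apply, Ext.mapExactFunctor_mk₀, ← hγ]
      rfl
  | succ n ih =>
    have hS := ModuleCat.shortExact_projectiveShortComplex N
    have : Module.Free A N.projectiveShortComplex.X₂ := inferInstance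
    set S := N.projectiveShortComplex
    have : Projective S.X₂ :=
      ModuleCat.projective_of_free (Module.Free.chooseBasis A S.X₂)
    have := killX_free_pd S.X₂
    have hS' := hS.map_of_exact (killX A)
    -- The Rees map commutes with the connecting maps of the presentation over `A` and over `A[X]`.
    have comm (α : Ext.{0} S.X₁ (ModuleCat.of A A) n) :
        shift k N (n + 1) (hS.extClass.comp α (add_comm 1 n)) =
          hS'.extClass.comp (shift k S.X₁ n α) (add_comm 1 (n + 1)) := by
      rw [shift_apply, shift_apply, Ext.mapExactFunctor_comp, Ext.mapExactFunctor_extClass]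
      exact Ext.comp_assoc _ _ _ _ _ (by omega)
    -- The Rees map is natural in the first argument.
    have nat (α : Ext.{0} S.X₂ (ModuleCat.of A A) n) :
        shift k S.X₁ n ((Ext.mk₀ S.f).comp α (zero_add n)) =
          (Ext.mk₀ ((killX A).map S.f)).comp (shift k S.X₂ n α) (zero_add (n + 1)) := by
      rw [shift_apply, shift_apply, Ext.mapExactFunctor_comp, Ext.mapExactFunctor_mk₀]
      exact Ext.comp_assoc _ _ _ _ _ (by omega)
    constructor
    · rw [injective_iff_map_eq_zero]
      intro α h
      obtain ⟨α, rfl⟩ := Ext.contravariant_sequence_exact₃ hS _ α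
        (Ext.eq_zero_of_projective _) (add_comm 1 n)
      rw [comm] at h
      obtain ⟨β, hβ⟩ := Ext.contravariant_sequence_exact₁ hS' _ _ _ h
      obtain ⟨β, rfl⟩ := (ih S.X₂).2 β
      have := (ih S.X₁).1 ((nat β).trans hβ)
      rw [← this, hS.extClass_comp_assoc]
    · intro β
      obtain ⟨β, rfl⟩ := Ext.contravariant_sequence_exact₃ hS' _ β
        (Ext.eq_zero_of_hasProjectiveDimensionLT (X := (killX A).obj S.X₂) _ 2 (by omega))
        (add_comm 1 (n + 1))
      obtain ⟨β, rfl⟩ := (ih S.X₁).2 β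
      exact ⟨_, comm β⟩
end

/-! ### Comparison of the two definitions of Ext -/

section
variable {C : Type*} [Category C] [Abelian C] [HasExt.{0} C] {X Y : C} (P : ProjectiveResolution X)

/-- The degree `0` companion of `ProjectiveResolution.extMk_eq_zero_iff`: there are no
coboundaries in degree `0`. -/
lemma extMk_zero_eq_zero (f : P.complex.X 0 ⟶ Y) (m : ℕ) (hm : 0 + 1 = m)
    (hf : P.complex.d m 0 ≫ f = 0) (h : P.extMk f m hm hf = 0) : f = 0 := by
  rw [← P.extEquivCohomologyClass.apply_eq_iff_eq,
    ProjectiveResolution.extEquivCohomologyClass_extMk,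
    ProjectiveResolution.extEquivCohomologyClass_zero,
    CochainComplex.HomComplex.CohomologyClass.mk_eq_zero_iff,
    CochainComplex.HomComplex.Cocycle.toSingleMk_mem_coboundaries_iff _ _ _ _ _ 1 (by simp)] at h
  obtain ⟨g, hg⟩ := h
  rw [(P.cochainComplex.isZero_of_isStrictlyLE 0 1 (by simp)).eq_of_src g 0, Limits.comp_zero] at hg
  rw [← cancel_epi (P.cochainComplexXIso (-(0 : ℕ)) 0 rfl).hom, Limits.comp_zero]
  exact hg.symm

variable (k : Type) [Field k] [Linear k C]

lemma smul_extMk {n : ℕ} (f : P.complex.X n ⟶ Y) (m : ℕ) (hm : n + 1 = m)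
    (hf : P.complex.d m n ≫ f = 0) (r : k) :
    r • P.extMk f m hm hf = P.extMk (r • f) m hm (by rw [Linear.comp_smul, hf, smul_zero]) := by
  rw [Abelian.Ext.smul_eq_comp_mk₀, ProjectiveResolution.extMk_comp_mk₀]
  congr 1
  rw [Linear.comp_smul, Category.comp_id]

/-- The map sending an `n`-cocycle of `Hom(P, Y)` to its class in `Abelian.Ext X Y n`, where `P` is
a projective resolution of `X`. Cocycles are encoded as the kernel of the differential of the
complex defining the derived functor. -/
def cocyclesToExt (n : ℕ) :
    LinearMap.ker ((P.complex.linearYonedaObj k Y).sc n).g.hom →ₗ[k] Abelian.Ext.{0} X Y n where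
  toFun f := P.extMk (n := n) (f.1 : P.complex.X n ⟶ Y) ((ComplexShape.up ℕ).next n) (by simp) f.2
  map_add' f g := (P.add_extMk (n := n) (f.1 : P.complex.X n ⟶ Y) g.1 _ (by simp) f.2 g.2).symm
  map_smul' r f := (smul_extMk P k (n := n) (f.1 : P.complex.X n ⟶ Y) _ (by simp) f.2 r).symm

lemma cocyclesToExt_surjective (n : ℕ) : Function.Surjective (cocyclesToExt (Y := Y) P k n) := by
  intro α
  obtain ⟨f, hf, rfl⟩ := P.extMk_surjective α ((ComplexShape.up ℕ).next n) (by simp)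
  exact ⟨⟨f, hf⟩, rfl⟩

/-- A cocycle has trivial class exactly when it is a coboundary. -/
lemma ker_cocyclesToExt (n : ℕ) : LinearMap.ker (cocyclesToExt (Y := Y) P k n) =
    LinearMap.range ((P.complex.linearYonedaObj k Y).sc n).moduleCatToCycles := by
  ext ⟨f, hf⟩
  -- The elements of the two submodules are morphisms up to unfolding; state the claim for those.
  have key (h : cocyclesToExt P k n ⟨f, hf⟩ = 0 ↔
      ∃ g : P.complex.X ((ComplexShape.up ℕ).prev n) ⟶ Y,
        P.complex.d n ((ComplexShape.up ℕ).prev n) ≫ g = f) :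
      ⟨f, hf⟩ ∈ LinearMap.ker (cocyclesToExt (Y := Y) P k n) ↔
      ⟨f, hf⟩ ∈ LinearMap.range ((P.complex.linearYonedaObj k Y).sc n).moduleCatToCycles :=
    h.trans ⟨fun ⟨g, hg⟩ => ⟨g, Subtype.ext hg⟩, fun ⟨g, hg⟩ => ⟨g, congrArg Subtype.val hg⟩⟩
  apply key
  -- In degree `0` the incoming differential is `0`, as `prev 0 = 0` by convention.
  rcases n with _ | p
  · constructor
    · intro h
      exact ⟨0, by rw [Limits.comp_zero]; exact (extMk_zero_eq_zero P _ _ (by simp) hf h).symm⟩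
    · rintro ⟨g, rfl⟩
      have : P.complex.d 0 ((ComplexShape.up ℕ).prev 0) = 0 := P.complex.shape _ _ (by simp)
      have h0 : P.complex.d 0 ((ComplexShape.up ℕ).prev 0) ≫ g = 0 := by
        rw [this, Limits.zero_comp]
      exact (congrArg (cocyclesToExt P k 0) (Subtype.ext h0)).trans (map_zero _)
  · exact P.extMk_eq_zero_iff (f : P.complex.X (p + 1) ⟶ Y) _ (by simp) hf _ (by simp)

/-- The `k`-linear isomorphism between Ext defined as a derived functor and Ext defined through
the derived category: both are the cohomology of `Hom(P, Y)`. -/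
def extIso [EnoughProjectives C] (n : ℕ) :
    (((Ext k C n).obj (Opposite.op X)).obj Y : Type _) ≃ₗ[k] Abelian.Ext.{0} X Y n :=
  (P.isoExt n Y).toLinearEquiv ≪≫ₗ
  ((P.complex.linearYonedaObj k Y).sc n).moduleCatHomologyIso.toLinearEquiv ≪≫ₗ
  Submodule.quotEquivOfEq _ _ (ker_cocyclesToExt P k n).symm ≪≫ₗ
  (cocyclesToExt P k n).quotKerEquivOfSurjective (cocyclesToExt_surjective P k n)
end

/-! ### The shift of total Ext groups -/

section
variable {A : Type} [Ring A]

/-- An additive isomorphism `φ : M ≃+ N` along which `p : A[X]` acts as its constant coefficient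
identifies `M` with `killX N`. -/
def isoKillX (M : ModuleCat.{0} A[X]) (N : ModuleCat.{0} A) (φ : M ≃+ N)
    (hφ : ∀ (p : A[X]) (m : M), φ (p • m) = constantCoeff p • φ m) :
    M ≅ (killX A).obj N :=
  let l : M ≃ₗ[A[X]] (killX A).obj N := { φ with map_smul' := hφ }
  l.toModuleIso

end

section
variable {k : Type} [Field k] {A : Type} [Ring A] [Algebra k A]

/-- The Rees isomorphism for the derived functor Ext, for an `A[X]`-module `M` isomorphic
to `killX N`. -/
def extShift (N : ModuleCat.{0} A) (M : ModuleCat.{0} A[X]) (e : M ≅ (killX A).obj N) (n : ℕ) :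
    (((Ext k (ModuleCat A) n).obj (Opposite.op N)).obj (ModuleCat.of A A) : Type _) ≃ₗ[k]
      (((Ext k (ModuleCat A[X]) (n + 1)).obj (Opposite.op M)).obj (ModuleCat.of A[X] A[X]) :
        Type _) :=
  extIso (projectiveResolution N) k n ≪≫ₗ
  LinearEquiv.ofBijective (shift k N n) (shift_bijective k n N) ≪≫ₗ
  (extIso (projectiveResolution ((killX A).obj N)) k (n + 1)).symm ≪≫ₗ
  (((Ext k (ModuleCat A[X]) (n + 1)).mapIso e.op).app (ModuleCat.of A[X] A[X])).toLinearEquiv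

lemma ext_zero_subsingleton (N : ModuleCat.{0} A) (M : ModuleCat.{0} A[X])
    (e : M ≅ (killX A).obj N) :
    Subsingleton (((Ext k (ModuleCat A[X]) 0).obj (Opposite.op M)).obj
      (ModuleCat.of A[X] A[X]) : Type _) := by
  have : Subsingleton (M ⟶ ModuleCat.of A[X] A[X]) := ⟨fun f g => by
    rw [← cancel_epi e.inv, hom_killX_eq_zero N (e.inv ≫ f), hom_killX_eq_zero N (e.inv ≫ g)]⟩
  exact ((extIso (projectiveResolution M) k 0).toEquiv.trans
    (Equiv.ofBijective _ (Ext.mk₀_bijective M (ModuleCat.of A[X] A[X]))).symm).subsingleton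
end

/-- A graded vector space vanishing in degree `0` has the same total space as its shift by one
degree. -/
def directSumShift {k : Type*} [Field k] {M N : ℕ → Type*}
    [∀ i, AddCommGroup (M i)] [∀ i, AddCommGroup (N i)] [∀ i, Module k (M i)]
    [∀ i, Module k (N i)] (h : Subsingleton (M 0)) (e : ∀ i, N i ≃ₗ[k] M (i + 1)) :
    (⨁ i, N i) ≃ₗ[k] ⨁ i, M i :=
  LinearEquiv.ofLinearMap
    (DirectSum.toModule k ℕ _ fun i => DirectSum.lof k ℕ M (i + 1) ∘ₗ (e i).toLinearMap)
    (DirectSum.toModule k ℕ _ fun i => match i with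
      | 0 => 0
      | i + 1 => DirectSum.lof k ℕ N i ∘ₗ (e i).symm.toLinearMap)
    (by
      refine DirectSum.linearMap_ext k fun i => LinearMap.ext fun x => ?_
      rcases i with _ | i
      · rw [Subsingleton.elim x 0]; simp only [map_zero]
      · simp [DirectSum.toModule_lof])
    (by
      refine DirectSum.linearMap_ext k fun i => LinearMap.ext fun x => ?_
      simp [DirectSum.toModule_lof])

end GorensteinPoly

/-- Let `A` be a connected, locally finite ℕ-graded `k`-algebra which is
left Noetherian, with augmentation `ε : A → k` vanishing on the positive-degree part.
Let `B = A[x]` be the polynomial ring in one (central) variable over `A`, with augmentation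
`ε'` extending `ε` and killing `x`.  If `⨁ᵢ Ext^i_A(k, A)` is one-dimensional over `k`,
then `B` is left Noetherian and `⨁ᵢ Ext^i_B(k, B)` is one-dimensional over `k`. -/
theorem stmt0 (k : Type) [Field k] [IsAlgClosed k] [CharZero k]
    (A : Type) [Ring A] [Algebra k A]
    (𝒜 : ℕ → Submodule k A) [GradedAlgebra 𝒜]
    (hconn : 𝒜 0 = Submodule.span k {(1 : A)})
    (hlf : ∀ n, Module.Finite k (𝒜 n))
    (hNoeth : IsNoetherianRing A)
    (ε : A →ₐ[k] k) (hε : ∀ n, n ≠ 0 → ∀ a ∈ 𝒜 n, ε a = 0)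
    (ε' : Polynomial A →ₐ[k] k)
    (hε'C : ∀ a : A, ε' (Polynomial.C a) = ε a) (hε'X : ε' Polynomial.X = 0)
    (hGor :
      letI : Module A k := Module.compHom k ε.toRingHom
      Module.finrank k
        (⨁ i : ℕ, (((Ext k (ModuleCat A) i).obj (Opposite.op (ModuleCat.of A k))).obj
          (ModuleCat.of A A) : Type _)) = 1) :
    IsNoetherianRing (Polynomial A) ∧
      (letI : Module (Polynomial A) k := Module.compHom k ε'.toRingHom
       Module.finrank k
        (⨁ i : ℕ, (((Ext k (ModuleCat (Polynomial A)) i).obj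
            (Opposite.op (ModuleCat.of (Polynomial A) k))).obj
          (ModuleCat.of (Polynomial A) (Polynomial A)) : Type _)) = 1) := by
  refine ⟨Polynomial.isNoetherianRing_left A, ?_⟩
  let : Module A k := Module.compHom k ε.toRingHom
  let : Module (Polynomial A) k := Module.compHom k ε'.toRingHom
  have hε' : ε'.toRingHom = ε.toRingHom.comp Polynomial.constantCoeff := by
    refine Polynomial.ringHom_ext (fun a => ?_) ?_
    · exact (hε'C a).trans (congrArg ε Polynomial.coeff_C_zero.symm)
    · exact hε'X.trans ((congrArg ε Polynomial.coeff_X_zero).trans (map_zero ε)).symm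
  -- `ε'` is `ε` composed with the constant coefficient, so `k` over `A[X]` is `killX` of `k`.
  let e := GorensteinPoly.isoKillX (ModuleCat.of (Polynomial A) k) (ModuleCat.of A k)
    (AddEquiv.refl k)
    fun p (c : k) => congrArg (fun φ : Polynomial A →+* k => φ p * c) hε'
  rw [← (GorensteinPoly.directSumShift
    (GorensteinPoly.ext_zero_subsingleton (k := k) _ _ e) (GorensteinPoly.extShift _ _ e)).finrank_eq]
  exact hGor
end
end

section
/- Let a, b, s ∈ k with a ≠ 0, b ≠ 0 and s² = ab, and let R = k⟨x,y⟩/(ax² + s(xy+yx) + by²) be the quotient of the free k-algebra on x, y by the two-sided ideal generated by ax² + s(xy+yx) + by², with augmentation ε : R → k sending x and y to 0. Then Ext^0_R(k,R) = 0, Ext^i_R(k,R) = 0 for all i ≥ 2, and Ext^1_R(k,R) is infinite-dimensional over k; in particular R is not left Gorenstein. -/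
/-!
Completing the square with `t = s / a` turns the relation `a x² + s(xy + yx) + b y²` into
`a (x + t y)²`, so with `u = x + t y` the algebra is `R = k⟨u, y⟩ / (u²)`, the free product of
`k[u]/(u²)` and `k[y]`.

The augmentation ideal is `R u ⊕ R y`, where `R y` is free and `R u ≅ R / R u`; this yields the free
resolution `⋯ → R → R → R → R × R → R → k` whose maps are right multiplication by `u` in
degrees at least `3`, `r ↦ (r u, 0)` in degree `2` and `(p, q) ↦ p u + q y` in degree `1`.
Its exactness rests on `IsPres.right_y` (`p u + q y = 0` forces `q = 0`) and `IsPres.right_u`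
(`p u = 0` forces `p ∈ R u`), both proved by letting `R` act on suitable modules through its
universal property.

After applying `Hom(-, R)`, the differentials become left multiplications, and the mirror images
of these two facts under the anti-involution of `R` fixing `u` and `y` give the vanishing in
degree `0` (`y r = 0` forces `r = 0`) and in degrees at least `2` (`u r = 0` forces `r ∈ u R`).
In degree `1` the cohomology maps onto `R / y R`, which surjects onto `k[X]`
(`IsPres.exists_surj`), hence it is infinite-dimensional, and so is the sum of all the Ext groups.
-/

open CategoryTheory
open scoped DirectSum

noncomputable section

/-- The single relation `a x² + s(xy + yx) + b y²` in the free algebra `k⟨x,y⟩`. -/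
inductive QuadRel (k : Type) [Field k] (a b s : k) :
    FreeAlgebra k (Fin 2) → FreeAlgebra k (Fin 2) → Prop
  | rel : QuadRel k a b s
      (a • (FreeAlgebra.ι k 0 * FreeAlgebra.ι k 0) +
        s • (FreeAlgebra.ι k 0 * FreeAlgebra.ι k 1 + FreeAlgebra.ι k 1 * FreeAlgebra.ι k 0) +
        b • (FreeAlgebra.ι k 1 * FreeAlgebra.ι k 1)) 0

/-! ### The algebra `k⟨u, y⟩ / (u²)` -/

/-- `R` is presented, as a `k`-algebra, by generators `u`, `y` and the single relation `u² = 0`,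
and `ε` is the augmentation killing both generators. Only the existence half of the universal
property is a separate field; uniqueness is the statement that `u` and `y` generate `R`. -/
structure IsPres {k R : Type} [Field k] [Ring R] [Algebra k R] (u y : R) (ε : R →ₐ[k] k) :
    Prop where
  sq : u * u = 0
  lift : ∀ (A : Type) [Ring A] [Algebra k A] (U Y : A), U * U = 0 →
    ∃ f : R →ₐ[k] A, f u = U ∧ f y = Y
  gen : Algebra.adjoin k {u, y} = ⊤
  aug_u : ε u = 0
  aug_y : ε y = 0

namespace IsPres

variable {k R : Type} [Field k] [Ring R] [Algebra k R] {u y : R} {ε : R →ₐ[k] k}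

lemma induct (h : IsPres u y ε) {P : R → Prop} (hc : ∀ c : k, P (algebraMap k R c))
    (hu : P u) (hy : P y) (hadd : ∀ r s, P r → P s → P (r + s))
    (hmul : ∀ r s, P r → P s → P (r * s)) (r : R) : P r := by
  have hr : r ∈ Algebra.adjoin k {u, y} := by rw [h.gen]; trivial
  induction hr using Algebra.adjoin_induction with
  | mem x hx => rcases hx with rfl | rfl <;> assumption
  | algebraMap c => exact hc c
  | add r s _ _ hr hs => exact hadd r s hr hs
  | mul r s _ _ hr hs => exact hmul r s hr hs

lemma decomp (h : IsPres u y ε) (r : R) :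
    ∃ p q, r = algebraMap k R (ε r) + p * u + q * y := by
  induction r using h.induct with
  | hc c => exact ⟨0, 0, by simp⟩
  | hu => exact ⟨1, 0, by simp [h.aug_u]⟩
  | hy => exact ⟨0, 1, by simp [h.aug_y]⟩
  | hadd r s hr hs =>
    obtain ⟨p, q, hr⟩ := hr
    obtain ⟨p', q', hs⟩ := hs
    refine ⟨p + p', q + q', ?_⟩
    nth_rewrite 1 [hr, hs]
    simp only [map_add]; noncomm_ring
  | hmul r s hr hs =>
    obtain ⟨p, q, hr⟩ := hr
    obtain ⟨p', q', hs⟩ := hs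
    refine ⟨r * p' + algebraMap k R (ε s) * p, r * q' + algebraMap k R (ε s) * q, ?_⟩
    nth_rewrite 1 [hs]
    have : r * algebraMap k R (ε s) = algebraMap k R (ε s) *
      (algebraMap k R (ε r) + p * u + q * y) := by
      rw [← hr, Algebra.commutes]
    simp only [mul_add, this, map_mul, add_mul, mul_assoc]
    rw [← Algebra.commutes (ε r) (algebraMap k R (ε s))]
    abel

/-- The coefficient of `y` in the decomposition of `IsPres.decomp` is unique: it is the Fox
derivative `∂` of `R` with `∂ u = 0`, `∂ y = 1` and `∂ (r s) = r ∂ s + ∂ r ε(s)`. -/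
lemma right_y (h : IsPres u y ε) {p q : R} (hpq : p * u + q * y = 0) : q = 0 := by
  -- `f r` is the matrix with rows `(r, ∂ r)` and `(0, ε r)`.
  obtain ⟨f, hfu, hfy⟩ := h.lift (Matrix (Fin 2) (Fin 2) R) !![u, 0; 0, 0] !![y, 1; 0, 0]
    (by ext i j; fin_cases i <;> fin_cases j <;> simp [h.sq])
  have hf : ∀ r, f r 0 0 = r ∧ f r 1 0 = 0 := by
    intro r
    induction r using h.induct with
    | hc c => simp [Matrix.algebraMap_matrix_apply]
    | hu => simp [hfu]
    | hy => simp [hfy]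
    | hadd r s hr hs => simp [hr, hs]
    | hmul r s hr hs => simp [Matrix.mul_apply, Fin.sum_univ_two, hr, hs]
  have := congrFun (congrFun (congrArg f hpq) 0) 1
  simpa [Matrix.mul_apply, Fin.sum_univ_two, hf, hfu, hfy] using this

/-- If `u • m₀ = 0`, then `p u ↦ p • m₀` is a well-defined module map `R u → M`. It is the restriction
of the Fox derivative `∂ : R → M` with `∂ u = m₀` and `∂ y = 0`, read off from the extension `M × k`
of the trivial module by `M` on which `u` sends `(0, 1)` to `(m₀, 0)`. -/
lemma smul_eq_zero_of_mul_u (h : IsPres u y ε) {M : Type} [AddCommGroup M] [Module k M]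
    [Module R M] [IsScalarTower k R M] {m₀ : M} (hm₀ : u • m₀ = 0) {p : R} (hp : p * u = 0) :
    p • m₀ = 0 := by
  have : SMulCommClass R k M := IsScalarTower.to_smulCommClass'
  let U : Module.End k (M × k) :=
    { toFun := fun x => (u • x.1 + x.2 • m₀, 0)
      map_add' := fun x x' => by
        ext
        · simp only [Prod.fst_add, Prod.snd_add, smul_add, add_smul]; abel
        · simp
      map_smul' := fun c x => by ext <;> simp [smul_smul, smul_comm u c] }
  let Y : Module.End k (M × k) :=
    { toFun := fun x => (y • x.1, 0)
      map_add' := fun x x' => by ext <;> simp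
      map_smul' := fun c x => by ext <;> simp [smul_comm y c] }
  obtain ⟨f, hfu, hfy⟩ := h.lift (Module.End k (M × k)) U Y (by
    refine LinearMap.ext fun x => ?_
    simp [U, smul_smul, h.sq, smul_comm u x.2, hm₀])
  have hf : ∀ r (m : M), f r (m, 0) = (r • m, 0) := by
    intro r
    induction r using h.induct with
    | hc c => intro m; simp
    | hu => intro m; simp [hfu, U]
    | hy => intro m; simp [hfy, Y]
    | hadd r s hr hs => intro m; simp [hr, hs, add_smul]
    | hmul r s hr hs => intro m; simp [hr, hs, mul_smul]
  have h1 := congrArg Prod.fst (LinearMap.congr_fun (congrArg f hp) ((0 : M), (1 : k)))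
  simpa [hfu, U, hf] using h1

/-- The left annihilator of `u` is `R u`. -/
lemma right_u (h : IsPres u y ε) {p : R} (hp : p * u = 0) : ∃ q, p = q * u := by
  let I : Submodule R R := Submodule.span R {u}
  have hu : u • I.mkQ 1 = 0 := by
    rw [← map_smul, Submodule.mkQ_apply, Submodule.Quotient.mk_eq_zero, smul_eq_mul, mul_one]
    exact Submodule.mem_span_singleton_self u
  have h2 := h.smul_eq_zero_of_mul_u hu hp
  rw [← map_smul, Submodule.mkQ_apply, Submodule.Quotient.mk_eq_zero,
    Submodule.mem_span_singleton] at h2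
  obtain ⟨q, hq⟩ := h2
  exact ⟨q, by simpa using hq.symm⟩

/-- The anti-involution of `R` fixing the two generators. -/
lemma rev (h : IsPres u y ε) : ∃ τ : R →ₗ[k] R, (∀ r s, τ (r * s) = τ s * τ r) ∧
    τ u = u ∧ τ y = y ∧ ∀ r, τ (τ r) = r := by
  obtain ⟨f, hfu, hfy⟩ := h.lift Rᵐᵒᵖ (.op u) (.op y) (by rw [← MulOpposite.op_mul, h.sq]; rfl)
  refine ⟨(MulOpposite.opLinearEquiv k).symm.toLinearMap ∘ₗ f.toLinearMap, ?_, ?_, ?_, ?_⟩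
  · intro r s; simp
  · simp [hfu]
  · simp [hfy]
  · intro r
    induction r using h.induct with
    | hc c => simp
    | hu => simp [hfu]
    | hy => simp [hfy]
    | hadd r s hr hs => simp_all
    | hmul r s hr hs => simp_all

lemma left_y (h : IsPres u y ε) {r : R} (hr : y * r = 0) : r = 0 := by
  obtain ⟨τ, hm, hu, hy, hi⟩ := h.rev
  have : τ r = 0 := h.right_y (p := 0) (by rw [zero_mul, zero_add, ← hy, ← hm, hr, map_zero])
  rw [← hi r, this, map_zero]

lemma left_u (h : IsPres u y ε) {r : R} (hr : u * r = 0) : ∃ q, r = u * q := by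
  obtain ⟨τ, hm, hu, hy, hi⟩ := h.rev
  obtain ⟨q, hq⟩ := h.right_u (p := τ r) (by rw [← hu, ← hm, hr, map_zero])
  exact ⟨τ q, by rw [← hi r, hq, hm, hu]⟩

open Polynomial in
/-- The quotient `R / y R` is infinite-dimensional. -/
lemma exists_surj (h : IsPres u y ε) : ∃ ψ : R →ₗ[k] k[X], (∀ r, ψ (y * r) = 0) ∧
    Function.Surjective ψ := by
  obtain ⟨τ, hm, hu, hy, hi⟩ := h.rev
  -- On `k × k[X]`, `u` sends `(c, f)` to `(0, c)` and `y` sends it to `(0, X f)`. Thus `y` kills the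
  -- vector `(1, 0)` and `yⁿ u` maps it to `(0, Xⁿ)`.
  let U : Module.End k (k × k[X]) :=
    LinearMap.inr k k k[X] ∘ₗ Polynomial.monomial 0 ∘ₗ LinearMap.fst k k k[X]
  let Y : Module.End k (k × k[X]) :=
    LinearMap.inr k k k[X] ∘ₗ LinearMap.mulLeft k X ∘ₗ LinearMap.snd k k k[X]
  obtain ⟨f, hfu, hfy⟩ := h.lift _ U Y (by ext <;> simp [U])
  refine ⟨LinearMap.snd k k k[X] ∘ₗ LinearMap.applyₗ (1, 0) ∘ₗ f.toLinearMap ∘ₗ τ, ?_, ?_⟩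
  · intro r
    have h0 : Y (1, 0) = 0 := by simp [Y]
    simp [hm, hy, hfy, h0]
  · intro p
    refine ⟨τ (aeval y p * u), ?_⟩
    have hY : ∀ p q : k[X], aeval Y p (0, q) = (0, p * q) := by
      intro p
      induction p using Polynomial.induction_on with
      | C a => intro q; simp [Algebra.smul_def]
      | add p q hp hq => intro g; simp [hp, hq, add_mul]
      | monomial n a ih =>
        intro q
        have := ih (X * q)
        rw [pow_succ, ← mul_assoc, map_mul, Module.End.mul_apply, aeval_X]
        simpa [Y, mul_assoc] using this
    have := hY p 1
    simp [hi, hfu, U, ← Polynomial.aeval_algHom_apply, hfy, this, Polynomial.monomial_zero_left]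

end IsPres

/-! ### The free resolution of the trivial module -/

section Resolution

variable {R : Type} [Ring R]

/-- The terms of the resolution: `R × R` in degree `1` and `R` in all other degrees. -/
def resX (R : Type) [Ring R] : ℕ → ModuleCat.{0} R
  | 0 => ModuleCat.of R R
  | 1 => ModuleCat.of R (R × R)
  | _ + 2 => ModuleCat.of R R

/-- The differentials of the resolution: `(p, q) ↦ p u + q y`, then `r ↦ (r u, 0)`, then `r ↦ r u`
in all higher degrees. -/
def resD (u y : R) : ∀ n, resX R (n + 1) ⟶ resX R n
  | 0 => ModuleCat.ofHom (X := R × R) (Y := R)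
      ((LinearMap.toSpanSingleton R R u).coprod (LinearMap.toSpanSingleton R R y))
  | 1 => ModuleCat.ofHom (X := R) (Y := R × R)
      (LinearMap.inl R R R ∘ₗ LinearMap.toSpanSingleton R R u)
  | _ + 2 => ModuleCat.ofHom (X := R) (Y := R) (LinearMap.toSpanSingleton R R u)

lemma resD_comp (u y : R) (hu : u * u = 0) (n : ℕ) : resD u y (n + 1) ≫ resD u y n = 0 := by
  refine ModuleCat.hom_ext (LinearMap.ext fun x => ?_)
  match n with
  | 0 =>
    have e : ∀ r : R, (r * u) * u + 0 * y = 0 := fun r => by rw [mul_assoc, hu]; simp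
    exact e x
  | 1 =>
    have e : ∀ r : R, (((r * u) * u, 0) : R × R) = 0 := fun r => by rw [mul_assoc, hu]; simp
    exact e x
  | n + 2 =>
    have e : ∀ r : R, (r * u) * u = 0 := fun r => by rw [mul_assoc, hu]; simp
    exact e x

/-- The complex `⋯ → R → R → R × R → R` resolving the trivial module. -/
def res (u y : R) (hu : u * u = 0) : ChainComplex (ModuleCat.{0} R) ℕ :=
  ChainComplex.of (resX R) (resD u y) (resD_comp u y hu)

lemma res_d (u y : R) (hu : u * u = 0) (n : ℕ) : (res u y hu).d (n + 1) n = resD u y n :=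
  ChainComplex.of_d _ _ _

lemma quasiIso_of_exact {K : ChainComplex (ModuleCat.{0} R) ℕ} {M : ModuleCat.{0} R}
    (f : K.X 0 ⟶ M) (w : K.d 1 0 ≫ f = 0) (hex : (ShortComplex.mk (K.d 1 0) f w).Exact)
    (hepi : Epi f) (hs : ∀ n, K.ExactAt (n + 1)) :
    QuasiIso ((ChainComplex.toSingle₀Equiv K M).symm ⟨f, w⟩) := by
  have hπ : ((ChainComplex.toSingle₀Equiv K M).symm ⟨f, w⟩).f 0 = f :=
    ChainComplex.toSingle₀Equiv_symm_apply_f_zero f w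
  generalize (ChainComplex.toSingle₀Equiv K M).symm ⟨f, w⟩ = π at hπ ⊢
  subst hπ
  refine ⟨fun n => ?_⟩
  cases n with
  | zero =>
    rw [ChainComplex.quasiIsoAt₀_iff, ShortComplex.quasiIso_iff_of_zeros']
    · exact ⟨hex, hepi⟩
    · exact K.shape _ _ (by simp)
    all_goals rfl
  | succ n =>
    rw [quasiIsoAt_iff_exactAt']
    · exact hs n
    · apply ChainComplex.exactAt_succ_single_obj

end Resolution

namespace IsPres

variable {k R : Type} [Field k] [Ring R] [Algebra k R] {u y : R} {ε : R →ₐ[k] k}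

lemma res_exactAt_succ (h : IsPres u y ε) (n : ℕ) : (res u y h.sq).ExactAt (n + 1) := by
  rw [HomologicalComplex.exactAt_iff' _ (n + 1 + 1) (n + 1) n (by simp) (by simp),
    ShortComplex.moduleCat_exact_iff]
  intro x hx
  change ((res u y h.sq).d (n + 1) n).hom x = 0 at hx
  change ∃ z, ((res u y h.sq).d (n + 1 + 1) (n + 1)).hom z = x
  rw [res_d] at hx ⊢
  match n with
  | 0 =>
    obtain ⟨p, q⟩ : R × R := x
    replace hx : p * u + q * y = 0 := hx
    obtain rfl := h.right_y hx
    obtain ⟨r, rfl⟩ := h.right_u (p := p) (by simpa using hx)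
    exact ⟨r, rfl⟩
  | 1 =>
    obtain ⟨r, rfl⟩ := h.right_u (p := x) (congrArg (Prod.fst : R × R → R) hx)
    exact ⟨r, rfl⟩
  | n + 2 =>
    obtain ⟨r, rfl⟩ := h.right_u (p := x) hx
    exact ⟨r, rfl⟩

variable [Module R k]

/-- The augmentation `r ↦ r • 1` of the resolution, which is `ε` when `R` acts on `k` through
`ε`. -/
def resAug (R k : Type) [Field k] [Ring R] [Module R k] : resX R 0 ⟶ ModuleCat.of R k :=
  ModuleCat.ofHom (X := R) (LinearMap.toSpanSingleton R k 1)

lemma resAug_apply (hk : ∀ (r : R) (c : k), r • c = ε r * c) (r : R) :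
    (resAug R k).hom r = ε r := by
  change r • (1 : k) = _
  rw [hk, mul_one]

lemma resD_resAug (h : IsPres u y ε) (hk : ∀ (r : R) (c : k), r • c = ε r * c) :
    resD u y 0 ≫ resAug R k = 0 := by
  ext x
  obtain ⟨p, q⟩ : R × R := x
  change (resAug R k).hom (p * u + q * y : R) = 0
  rw [resAug_apply hk]
  simp [h.aug_u, h.aug_y]

lemma resAug_exact (h : IsPres u y ε) (hk : ∀ (r : R) (c : k), r • c = ε r * c) :
    (ShortComplex.mk _ _ (h.resD_resAug hk)).Exact := by
  rw [ShortComplex.moduleCat_exact_iff]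
  intro (r : R) (hr : (resAug R k).hom r = 0)
  rw [resAug_apply hk] at hr
  obtain ⟨p, q, e⟩ := h.decomp r
  rw [hr, map_zero, zero_add] at e
  exact ⟨((p, q) : R × R), e.symm⟩

lemma resAug_epi (hk : ∀ (r : R) (c : k), r • c = ε r * c) : Epi (resAug R k) := by
  rw [ModuleCat.epi_iff_surjective]
  intro c
  exact ⟨algebraMap k R c, by rw [resAug_apply hk]; simp⟩

/-- The complex `res u y` as a projective resolution of `k`, with `R` acting through `ε`. -/
def projRes (h : IsPres u y ε) (hk : ∀ (r : R) (c : k), r • c = ε r * c) :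
    ProjectiveResolution (ModuleCat.of R k) where
  complex := res u y h.sq
  projective n := by
    match n with
    | 0 => exact inferInstanceAs (Projective (ModuleCat.of R R))
    | 1 => exact inferInstanceAs (Projective (ModuleCat.of R (R × R)))
    | _ + 2 => exact inferInstanceAs (Projective (ModuleCat.of R R))
  π := (ChainComplex.toSingle₀Equiv _ _).symm ⟨resAug R k, by
    rw [res_d]; exact h.resD_resAug hk⟩
  quasiIso := by
    have e : resD u y 0 = (res u y h.sq).d 1 0 := (res_d u y h.sq 0).symm
    have hex := h.resAug_exact hk
    simp only [e] at hex
    exact quasiIso_of_exact _ _ hex (resAug_epi hk) h.res_exactAt_succ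

end IsPres

/-! ### Cohomology of Hom complexes -/

lemma subsingleton_homology_zero {k R : Type} [Field k] [Ring R] [Algebra k R]
    (K : ChainComplex (ModuleCat.{0} R) ℕ) (N : ModuleCat.{0} R)
    (H : ∀ φ : K.X 0 ⟶ N, K.d 1 0 ≫ φ = 0 → φ = 0) :
    Subsingleton ((K.linearYonedaObj k N).homology 0) := by
  apply ModuleCat.subsingleton_of_isZero
  rw [← HomologicalComplex.exactAt_iff_isZero_homology,
    HomologicalComplex.exactAt_iff' _ 0 0 1 (by simp) (by simp), ShortComplex.moduleCat_exact_iff]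
  intro (φ : K.X 0 ⟶ N) (hφ : K.d 1 0 ≫ φ = 0)
  exact ⟨0, by rw [map_zero]; exact (H φ hφ).symm⟩

lemma subsingleton_homology_succ {k R : Type} [Field k] [Ring R] [Algebra k R]
    (K : ChainComplex (ModuleCat.{0} R) ℕ) (N : ModuleCat.{0} R) (n : ℕ)
    (H : ∀ φ : K.X (n + 1) ⟶ N, K.d (n + 2) (n + 1) ≫ φ = 0 →
      ∃ χ : K.X n ⟶ N, K.d (n + 1) n ≫ χ = φ) :
    Subsingleton ((K.linearYonedaObj k N).homology (n + 1)) := by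
  apply ModuleCat.subsingleton_of_isZero
  rw [← HomologicalComplex.exactAt_iff_isZero_homology,
    HomologicalComplex.exactAt_iff' _ n (n + 1) (n + 2) (by simp) (by simp),
    ShortComplex.moduleCat_exact_iff]
  intro (φ : K.X (n + 1) ⟶ N) (hφ : K.d (n + 2) (n + 1) ≫ φ = 0)
  exact H φ hφ

/-- A linear map that kills boundaries and is surjective on cycles factors through a surjection
from homology. -/
lemma finite_of_finite_homology {k : Type} [Field k] (S : ShortComplex (ModuleCat.{0} k))
    {V : Type} [AddCommGroup V] [Module k V] (Λ : S.X₂ →ₗ[k] V) (hf : ∀ x, Λ (S.f x) = 0)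
    (hs : ∀ v, ∃ x, S.g x = 0 ∧ Λ x = v) (hfin : Module.Finite k S.homology) :
    Module.Finite k V := by
  have : Module.Finite k (LinearMap.ker S.g.hom ⧸ LinearMap.range S.moduleCatToCycles) :=
    Module.Finite.equiv S.moduleCatHomologyIso.toLinearEquiv
  let Λ' := (LinearMap.range S.moduleCatToCycles).liftQ
    (Λ ∘ₗ (LinearMap.ker S.g.hom).subtype) (by
      rintro _ ⟨x, rfl⟩
      exact hf x)
  refine Module.Finite.of_surjective Λ' fun v => ?_
  obtain ⟨x, hx, rfl⟩ := hs v
  exact ⟨Submodule.Quotient.mk ⟨x, hx⟩, rfl⟩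

/-- The map `φ ↦ ψ (φ x)` on a Hom space, for `ψ` additive and `k`-linear. As `k` acts on
an object of `ModuleCat R` through `algebraMap k R`, linearity is phrased with that action. -/
def evalHom {k R : Type} [Field k] [Ring R] [Algebra k R] (M N : ModuleCat.{0} R) (x : M)
    {V : Type} [AddCommGroup V] [Module k V] (ψ : N →+ V)
    (hψ : ∀ (c : k) (n : N), ψ (algebraMap k R c • n) = c • ψ n) : (M ⟶ N) →ₗ[k] V where
  toFun φ := ψ (φ.hom x)
  map_add' _ _ := ψ.map_add _ _
  map_smul' c φ := hψ c (φ.hom x)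

lemma not_finite_homology_one {k R : Type} [Field k] [Ring R] [Algebra k R]
    (K : ChainComplex (ModuleCat.{0} R) ℕ) (N : ModuleCat.{0} R)
    {V : Type} [AddCommGroup V] [Module k V] (hV : ¬ Module.Finite k V)
    (Λ : (K.X 1 ⟶ N) →ₗ[k] V) (hf : ∀ χ : K.X 0 ⟶ N, Λ (K.d 1 0 ≫ χ) = 0)
    (hs : ∀ v, ∃ φ : K.X 1 ⟶ N, K.d 2 1 ≫ φ = 0 ∧ Λ φ = v) :
    ¬ Module.Finite k ((K.linearYonedaObj k N).homology 1) := by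
  intro hfin
  have e := (K.linearYonedaObj k N).homologyIsoSc' 0 1 2 (by simp) (by simp)
  exact hV (finite_of_finite_homology ((K.linearYonedaObj k N).sc' 0 1 2) Λ hf hs
    (Module.Finite.equiv e.toLinearEquiv))

lemma finite_of_finite_directSum {k : Type} [Field k] (M : ℕ → Type) [∀ i, AddCommGroup (M i)]
    [∀ i, Module k (M i)] (i : ℕ) (h : Module.Finite k (⨁ i, M i)) : Module.Finite k (M i) :=
  Module.Finite.of_surjective (DirectSum.component k ℕ M i)
    fun x => ⟨DirectSum.lof k ℕ M i x, DirectSum.component.lof_self k i x⟩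

/-! ### The Ext groups -/

namespace IsPres

open Polynomial

variable {k R : Type} [Field k] [Ring R] [Algebra k R] {u y : R} {ε : R →ₐ[k] k}

lemma hom_apply_eq (φ : ModuleCat.of R R ⟶ ModuleCat.of R R) (r : R) :
    φ.hom r = r * (φ.hom (1 : R) : R) := by
  rw [← smul_eq_mul, ← map_smul]; simp

lemma coh_zero (h : IsPres u y ε) :
    Subsingleton (((res u y h.sq).linearYonedaObj k (ModuleCat.of R R)).homology 0) := by
  apply subsingleton_homology_zero
  intro (φ : ModuleCat.of R R ⟶ ModuleCat.of R R) hφ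
  rw [res_d] at hφ
  have h1 : φ.hom (0 * u + 1 * y : R) = 0 :=
    LinearMap.congr_fun (congrArg ModuleCat.Hom.hom hφ) ((0, 1) : R × R)
  rw [hom_apply_eq, zero_mul, zero_add, one_mul] at h1
  have h2 := h.left_y h1
  refine ModuleCat.hom_ext (LinearMap.ext fun r => ?_)
  refine (hom_apply_eq φ r).trans ?_
  rw [h2, mul_zero]; rfl

lemma coh_add_two (h : IsPres u y ε) (n : ℕ) :
    Subsingleton (((res u y h.sq).linearYonedaObj k (ModuleCat.of R R)).homology (n + 2)) := by
  apply subsingleton_homology_succ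
  intro (φ : ModuleCat.of R R ⟶ ModuleCat.of R R) hφ
  rw [res_d] at hφ ⊢
  have h1 : φ.hom (1 * u : R) = 0 :=
    LinearMap.congr_fun (congrArg ModuleCat.Hom.hom hφ) (1 : R)
  rw [hom_apply_eq, one_mul] at h1
  obtain ⟨q, hq⟩ := h.left_u h1
  have hφ' : ∀ r : R, φ.hom r = r * u * q := fun r => by rw [hom_apply_eq, hq, mul_assoc]
  match n with
  | 0 =>
    refine ⟨ModuleCat.ofHom (X := R × R) (Y := R)
      (LinearMap.toSpanSingleton R R q ∘ₗ LinearMap.fst R R R), ?_⟩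
    exact ModuleCat.hom_ext (LinearMap.ext fun r => (hφ' r).symm)
  | n + 1 =>
    refine ⟨ModuleCat.ofHom (X := R) (Y := R) (LinearMap.toSpanSingleton R R q), ?_⟩
    exact ModuleCat.hom_ext (LinearMap.ext fun r => (hφ' r).symm)

/-- A cocycle `φ : R × R → R` is sent to the class of `φ (0, 1)` in `R / y R`; coboundaries go to
zero and every class is attained. -/
lemma coh_one (h : IsPres u y ε) : ¬ Module.Finite k
    (((res u y h.sq).linearYonedaObj k (ModuleCat.of R R)).homology 1) := by
  obtain ⟨ψ, hψ, hs⟩ := h.exists_surj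
  refine not_finite_homology_one _ _ Polynomial.not_finite
    (evalHom ((res u y h.sq).X 1) (ModuleCat.of R R) ((0, 1) : R × R) ψ.toAddMonoidHom
      fun c (r : R) => by
        rw [smul_eq_mul, ← Algebra.smul_def]
        exact ψ.map_smul c r) ?_ ?_
  · intro (χ : ModuleCat.of R R ⟶ ModuleCat.of R R)
    rw [res_d]
    change ψ (χ.hom (0 * u + 1 * y : R)) = 0
    rw [hom_apply_eq, zero_mul, zero_add, one_mul]
    exact hψ _
  · intro v
    obtain ⟨r, rfl⟩ := hs v
    refine ⟨ModuleCat.ofHom (X := R × R) (Y := R)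
      (LinearMap.toSpanSingleton R R r ∘ₗ LinearMap.snd R R R), ?_, ?_⟩
    · rw [res_d]
      refine ModuleCat.hom_ext (LinearMap.ext fun x => ?_)
      change (0 : R) * r = 0
      rw [zero_mul]
    · change ψ ((1 : R) * r) = ψ r
      rw [one_mul]

theorem ext_main (h : IsPres u y ε) [Module R k] (hk : ∀ (r : R) (c : k), r • c = ε r * c) :
    (Subsingleton
        ((((Ext k (ModuleCat R) 0).obj (Opposite.op (ModuleCat.of R k))).obj
          (ModuleCat.of R R) : Type _))) ∧
    (∀ i : ℕ, 2 ≤ i → Subsingleton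
        ((((Ext k (ModuleCat R) i).obj (Opposite.op (ModuleCat.of R k))).obj
          (ModuleCat.of R R) : Type _))) ∧
    ¬ Module.Finite k
        ((((Ext k (ModuleCat R) 1).obj (Opposite.op (ModuleCat.of R k))).obj
          (ModuleCat.of R R) : Type _)) ∧
    Module.finrank k
        (⨁ i : ℕ, (((Ext k (ModuleCat R) i).obj (Opposite.op (ModuleCat.of R k))).obj
          (ModuleCat.of R R) : Type _)) ≠ 1 := by
  have e (n : ℕ) := ((h.projRes hk).isoExt (R := k) n (ModuleCat.of R R)).toLinearEquiv
  have h1 : ¬ Module.Finite k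
        ((((Ext k (ModuleCat R) 1).obj (Opposite.op (ModuleCat.of R k))).obj
          (ModuleCat.of R R) : Type _)) := fun hf => h.coh_one (Module.Finite.equiv (e 1))
  refine ⟨?_, ?_, h1, ?_⟩
  · have : Subsingleton (((h.projRes hk).complex.linearYonedaObj k (ModuleCat.of R R)).homology 0) :=
      h.coh_zero
    exact (e 0).toEquiv.subsingleton
  · intro i hi
    obtain ⟨n, rfl⟩ := Nat.exists_eq_add_of_le' hi
    have : Subsingleton
        (((h.projRes hk).complex.linearYonedaObj k (ModuleCat.of R R)).homology (n + 2)) :=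
      h.coh_add_two n
    exact (e (n + 2)).toEquiv.subsingleton
  · intro hr
    have := Module.finite_of_finrank_pos (by rw [hr]; exact one_pos)
    exact h1 (finite_of_finite_directSum _ 1 this)

end IsPres

/-! ### The quadratic algebra -/

/-- Completing the square: the generators are `u = x + (s / a) y` and `y`. -/
lemma isPres_ringQuot (k : Type) [Field k] (a b s : k) (ha : a ≠ 0) (hs : s ^ 2 = a * b)
    (ε : RingQuot (QuadRel k a b s) →ₐ[k] k)
    (hεx : ε (RingQuot.mkAlgHom k (QuadRel k a b s) (FreeAlgebra.ι k 0)) = 0)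
    (hεy : ε (RingQuot.mkAlgHom k (QuadRel k a b s) (FreeAlgebra.ι k 1)) = 0) :
    IsPres (RingQuot.mkAlgHom k (QuadRel k a b s) (FreeAlgebra.ι k 0) +
      (s / a) • RingQuot.mkAlgHom k (QuadRel k a b s) (FreeAlgebra.ι k 1))
      (RingQuot.mkAlgHom k (QuadRel k a b s) (FreeAlgebra.ι k 1)) ε := by
  obtain ⟨t, rfl⟩ : ∃ t, s = a * t := ⟨s / a, by field_simp⟩
  obtain rfl : b = a * t ^ 2 := mul_left_cancel₀ ha (by rw [← hs]; ring)
  rw [mul_div_cancel_left₀ _ ha]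
  have key : ∀ {A : Type} [Ring A] [Algebra k A] (X Y : A),
      a • (X * X) + (a * t) • (X * Y + Y * X) + (a * t ^ 2) • (Y * Y) =
        a • ((X + t • Y) * (X + t • Y)) := by
    intro A _ _ X Y
    simp only [mul_add, add_mul, smul_mul_assoc, mul_smul_comm, smul_add, smul_smul]
    rw [show a * t ^ 2 = a * (t * t) by ring]
    abel
  constructor
  · have h := RingQuot.mkAlgHom_rel k (QuadRel.rel (k := k) (a := a) (b := a * t ^ 2) (s := a * t))
    simp only [map_add, map_smul, map_mul, map_zero] at h
    rw [key] at h
    exact (smul_eq_zero.mp h).resolve_left ha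
  · intro A _ _ U Y hU
    refine ⟨RingQuot.liftAlgHom k ⟨FreeAlgebra.lift k ![U - t • Y, Y], ?_⟩, ?_, ?_⟩
    · rintro _ _ ⟨⟩
      simp only [map_add, map_smul, map_mul, map_zero, FreeAlgebra.lift_ι_apply,
        Matrix.cons_val_zero, Matrix.cons_val_one, smul_add (a * t)] at key ⊢
      rw [key, sub_add_cancel, hU, smul_zero]
    · simp
    · simp
  · rw [eq_top_iff]
    rintro r -
    obtain ⟨f, rfl⟩ := RingQuot.mkAlgHom_surjective k _ r
    induction f using FreeAlgebra.induction with
    | grade0 c => rw [AlgHom.commutes]; exact Subalgebra.algebraMap_mem _ c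
    | grade1 i =>
      set X := RingQuot.mkAlgHom k (QuadRel k a (a * t ^ 2) (a * t)) (FreeAlgebra.ι k 0) with hX
      set Y := RingQuot.mkAlgHom k (QuadRel k a (a * t ^ 2) (a * t)) (FreeAlgebra.ι k 1) with hY
      have h1 : X + t • Y ∈ Algebra.adjoin k {X + t • Y, Y} :=
        Algebra.subset_adjoin (Or.inl rfl)
      have h2 : Y ∈ Algebra.adjoin k {X + t • Y, Y} := Algebra.subset_adjoin (Or.inr rfl)
      have h3 : X ∈ Algebra.adjoin k {X + t • Y, Y} := by
        have := Subalgebra.sub_mem _ h1 (Subalgebra.smul_mem _ h2 t)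
        rwa [add_sub_cancel_right] at this
      revert i
      exact Fin.forall_fin_two.mpr ⟨h3, h2⟩
    | mul f g hf hg => rw [map_mul]; exact Subalgebra.mul_mem _ hf hg
    | add f g hf hg => rw [map_add]; exact Subalgebra.add_mem _ hf hg
  · simp [hεx, hεy]
  · exact hεy

/-- For `a, b ∈ k` nonzero and `s² = ab`, the algebra
`R = k⟨x,y⟩/(ax² + s(xy+yx) + by²)` with augmentation killing `x, y` satisfies
`Ext⁰_R(k,R) = 0`, `Extⁱ_R(k,R) = 0` for `i ≥ 2`, `Ext¹_R(k,R)` is infinite-dimensional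
over `k`; in particular `R` is not left Gorenstein. -/
theorem stmt1 (k : Type) [Field k] [IsAlgClosed k] [CharZero k]
    (a b s : k) (ha : a ≠ 0) (hb : b ≠ 0) (hs : s ^ 2 = a * b)
    (ε : RingQuot (QuadRel k a b s) →ₐ[k] k)
    (hεx : ε (RingQuot.mkAlgHom k (QuadRel k a b s) (FreeAlgebra.ι k 0)) = 0)
    (hεy : ε (RingQuot.mkAlgHom k (QuadRel k a b s) (FreeAlgebra.ι k 1)) = 0) :
    letI R := RingQuot (QuadRel k a b s)
    letI : Module R k := Module.compHom k ε.toRingHom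
    (Subsingleton
        ((((Ext k (ModuleCat R) 0).obj (Opposite.op (ModuleCat.of R k))).obj
          (ModuleCat.of R R) : Type _))) ∧
    (∀ i : ℕ, 2 ≤ i → Subsingleton
        ((((Ext k (ModuleCat R) i).obj (Opposite.op (ModuleCat.of R k))).obj
          (ModuleCat.of R R) : Type _))) ∧
    ¬ Module.Finite k
        ((((Ext k (ModuleCat R) 1).obj (Opposite.op (ModuleCat.of R k))).obj
          (ModuleCat.of R R) : Type _)) ∧
    Module.finrank k
        (⨁ i : ℕ, (((Ext k (ModuleCat R) i).obj (Opposite.op (ModuleCat.of R k))).obj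
          (ModuleCat.of R R) : Type _)) ≠ 1 := by
  let _ : Module (RingQuot (QuadRel k a b s)) k := Module.compHom k ε.toRingHom
  exact (isPres_ringQuot k a b s ha hs ε hεx hεy).ext_main fun r c => rfl
end
end

section
/- Let M = (m_{ij}) ∈ M₃(k) be a matrix of rank 2, and let X be the 6×9 matrix over k whose rows are (m₁₁, m₂₁, m₃₁, 0, 0, 0, 0, 0, 0), (m₁₂, m₂₂, m₃₂, m₁₁, m₂₁, m₃₁, 0, 0, 0), (m₁₃, m₂₃, m₃₃, 0, 0, 0, m₁₁, m₂₁, m₃₁), (0, 0, 0, m₁₃, m₂₃, m₃₃, m₁₂, m₂₂, m₃₂), (0, 0, 0, m₁₂, m₂₂, m₃₂, 0, 0, 0), (0, 0, 0, 0, 0, 0, m₁₃, m₂₃, m₃₃). Then the rank of X equals 5. -/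
/-! Writing `c₁, c₂, c₃` for the columns of `M`, the transpose of `X` is the matrix of the linear map
`A ↦ M * A` on symmetric `3 × 3` matrices, where `A` has the coordinates
`a₁₁, a₁₂, a₁₃, a₂₃, a₂₂, a₃₃`. So a linear relation between the rows of `X` is a symmetric `A` whose
columns lie in `ker M`. As `M` has rank `2`, `ker M` is a line `k ∙ v`, and such an `A` is a multiple of
`v * vᵀ`. The space of relations is thus a line, and the rank is `6 - 1 = 5`. -/

theorem finrank_ker_add_rank {k m n : Type*} [Field k] [Fintype m] [Fintype n]
    (A : Matrix m n k) :
    A.rank + Module.finrank k (LinearMap.ker A.mulVecLin) = Fintype.card n := by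
  have h := A.mulVecLin.finrank_range_add_finrank_ker
  simpa [Matrix.rank] using h

/-- A symmetric matrix, given by its six entries, whose columns are all multiples of `v ≠ 0`
is a multiple of `v * vᵀ`. -/
theorem symm_eq_smul {k : Type*} [Field k] (v : Fin 3 → k) (hv : v ≠ 0)
    (a : Fin 6 → k) (p q r : k)
    (hp : p • v = ![a 0, a 1, a 2]) (hq : q • v = ![a 1, a 4, a 3])
    (hr : r • v = ![a 2, a 3, a 5]) :
    ∃ c : k, c • ![v 0 * v 0, v 0 * v 1, v 0 * v 2, v 1 * v 2, v 1 * v 1, v 2 * v 2] = a := by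
  have hp0 := congrFun hp 0
  have hp1 := congrFun hp 1
  have hp2 := congrFun hp 2
  have hq0 := congrFun hq 0
  have hq1 := congrFun hq 1
  have hq2 := congrFun hq 2
  have hr0 := congrFun hr 0
  have hr1 := congrFun hr 1
  have hr2 := congrFun hr 2
  simp at hp0 hp1 hp2 hq0 hq1 hq2 hr0 hr1 hr2
  -- By symmetry `(p, q, r)` is proportional to `v`; the factor is read off at a nonzero entry of `v`.
  have key : ∃ c : k, p = c * v 0 ∧ q = c * v 1 ∧ r = c * v 2 := by
    obtain ⟨i, hi⟩ := Function.ne_iff.mp hv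
    fin_cases i <;> simp at hi
    · refine ⟨p / v 0, ?_, ?_, ?_⟩ <;> field_simp <;> grind
    · refine ⟨q / v 1, ?_, ?_, ?_⟩ <;> field_simp <;> grind
    · refine ⟨r / v 2, ?_, ?_, ?_⟩ <;> field_simp <;> grind
  obtain ⟨c, rfl, rfl, rfl⟩ := key
  refine ⟨c, ?_⟩
  ext i
  fin_cases i <;> simp <;> grind

/-- If `M = (mᵢⱼ) ∈ M₃(k)` has rank `2`, then the given `6 × 9` matrix `X`
built from the entries of `M` has rank `5`. -/
theorem stmt6 (k : Type) [Field k] [IsAlgClosed k] [CharZero k]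
    (M : Matrix (Fin 3) (Fin 3) k) (hM : M.rank = 2) :
    (Matrix.rank
      !![M 0 0, M 1 0, M 2 0, 0, 0, 0, 0, 0, 0;
         M 0 1, M 1 1, M 2 1, M 0 0, M 1 0, M 2 0, 0, 0, 0;
         M 0 2, M 1 2, M 2 2, 0, 0, 0, M 0 0, M 1 0, M 2 0;
         0, 0, 0, M 0 2, M 1 2, M 2 2, M 0 1, M 1 1, M 2 1;
         0, 0, 0, M 0 1, M 1 1, M 2 1, 0, 0, 0;
         0, 0, 0, 0, 0, 0, M 0 2, M 1 2, M 2 2]) = 5 := by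
  rw [← Matrix.rank_transpose]
  set Y := Matrix.transpose _ with hY
  have hk : Module.finrank k (LinearMap.ker M.mulVecLin) = 1 := by
    have := finrank_ker_add_rank M
    simp at this
    omega
  obtain ⟨⟨v, hvM⟩, hv0, hv⟩ := finrank_eq_one_iff'.mp hk
  have hv0' : v ≠ 0 := fun h => hv0 (Subtype.ext h)
  have hmul (u : Fin 3 → k) (hu : M.mulVec u = 0) : ∃ c : k, c • v = u := by
    obtain ⟨c, hc⟩ := hv ⟨u, by simpa using hu⟩
    exact ⟨c, congrArg Subtype.val hc⟩
  -- The left kernel of `X` consists of the symmetric matrices with columns in `ker M`.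
  have hker (a : Fin 6 → k) : Y.mulVec a = 0 ↔ M.mulVec ![a 0, a 1, a 2] = 0 ∧
      M.mulVec ![a 1, a 4, a 3] = 0 ∧ M.mulVec ![a 2, a 3, a 5] = 0 := by
    simp only [funext_iff, Fin.forall_fin_succ, hY, Matrix.mulVec, dotProduct, Fin.sum_univ_succ]
    simp [Matrix.transpose_apply]
    grind
  have hY1 : Module.finrank k (LinearMap.ker Y.mulVecLin) = 1 := by
    have hMv : M.mulVec v = 0 := by simpa using hvM
    have hsm (c : k) (u : Fin 3 → k) (h : c • v = u) : M.mulVec u = 0 := by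
      rw [← h, Matrix.mulVec_smul, hMv, smul_zero]
    refine finrank_eq_one_iff'.mpr
      ⟨⟨![v 0 * v 0, v 0 * v 1, v 0 * v 2, v 1 * v 2, v 1 * v 1, v 2 * v 2], ?_⟩, ?_, ?_⟩
    · rw [LinearMap.mem_ker, Matrix.mulVecLin_apply, hker]
      refine ⟨hsm (v 0) _ ?_, hsm (v 1) _ ?_, hsm (v 2) _ ?_⟩ <;> ext i <;>
        fin_cases i <;> simp <;> ring
    · intro h
      have h' := congrArg Subtype.val h
      apply hv0'
      have h0 := congrFun h' 0
      have h1 := congrFun h' 4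
      have h2 := congrFun h' 5
      simp at h0 h1 h2
      ext i
      fin_cases i <;> simp [h0, h1, h2]
    · rintro ⟨a, ha⟩
      rw [LinearMap.mem_ker, Matrix.mulVecLin_apply, hker] at ha
      obtain ⟨p, hp⟩ := hmul _ ha.1
      obtain ⟨q, hq⟩ := hmul _ ha.2.1
      obtain ⟨r, hr⟩ := hmul _ ha.2.2
      obtain ⟨c, hc⟩ := symm_eq_smul v hv0' a p q r hp hq hr
      exact ⟨c, Subtype.ext hc⟩
  have := finrank_ker_add_rank Y
  simp at this
  omega
end
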